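/- arXiv:0801.0679 — 8 statements merged into one kernel-verified Lean document; each statement's English description precedes it below -/
import Mathlib

section
/- Let 𝔖 be a board with no isolated point. Then 2·𝓕(𝔖,ℤ) ⊆ V(𝔖,ℤ); that is, every function 𝔖 → ℤ all of whose values are even integers is a ℤ-linear combination of moves of 𝔖. -/
def dirs : Finset (ℤ × ℤ) := {(1,0), (-1,0), (0,1), (0,-1)}

def chi (X : ℤ × ℤ) : (ℤ × ℤ) → ℤ := fun Y => if Y = X then 1 else 0

def chiSet (I : Finset (ℤ × ℤ)) : (ℤ × ℤ) → ℤ := fun P => if P ∈ I then 1 else 0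

def IsMove (S : Finset (ℤ × ℤ)) (g : (ℤ × ℤ) → ℤ) : Prop :=
  ∃ P d : ℤ × ℤ, d ∈ dirs ∧ P ∈ S ∧ P + d ∈ S ∧ P + d + d ∈ S ∧
    g = chi P + chi (P + d) - chi (P + d + d)

def IsMiddle (S : Finset (ℤ × ℤ)) (Q : ℤ × ℤ) : Prop :=
  ∃ P d : ℤ × ℤ, d ∈ dirs ∧ P ∈ S ∧ P + d ∈ S ∧ P + d + d ∈ S ∧ Q = P + d

def Neighbor (S : Finset (ℤ × ℤ)) (A B : ℤ × ℤ) : Prop :=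
  ∃ d ∈ dirs, A ∈ S ∧ A + d ∈ S ∧ A + d + d ∈ S ∧ B = A + d + d

def NoIsolatedPoint (S : Finset (ℤ × ℤ)) : Prop :=
  ∀ P ∈ S, ∃ Q, Relation.EqvGen (Neighbor S) P Q ∧ IsMiddle S Q

def IsResourceCount (S : Finset (ℤ × ℤ)) (π : (ℤ × ℤ) → ℝ) : Prop :=
  ∀ P d : ℤ × ℤ, d ∈ dirs → P ∈ S → P + d ∈ S → P + d + d ∈ S →
    π (P + d + d) ≤ π P + π (P + d)

def LegalMove (S I : Finset (ℤ × ℤ)) (g : (ℤ × ℤ) → ℤ) (I' : Finset (ℤ × ℤ)) : Prop :=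
  ∃ P d : ℤ × ℤ, d ∈ dirs ∧ P ∈ S ∧ P + d ∈ S ∧ P + d + d ∈ S ∧
    g = chi P + chi (P + d) - chi (P + d + d) ∧
    P ∈ I ∧ P + d ∈ I ∧ P + d + d ∉ I ∧
    I' = (I \ {P, P + d}) ∪ {P + d + d}

def Transforms (S : Finset (ℤ × ℤ)) :
    List ((ℤ × ℤ) → ℤ) → Finset (ℤ × ℤ) → Finset (ℤ × ℤ) → Prop
  | [], I, J => I = J
  | g :: L, I, J => ∃ I', LegalMove S I g I' ∧ Transforms S L I' J

def boxProd (g₁ g₂ : (ℤ × ℤ) → ℤ) : Sym2 (ℤ × ℤ) → ℤ :=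
  Sym2.lift ⟨fun A B => if A = B then g₁ A * g₂ A else g₁ A * g₂ B + g₁ B * g₂ A, by
    intro A B
    by_cases h : A = B
    · subst h; rfl
    · simp only [if_neg h, if_neg (Ne.symm h)]; ring⟩

def moveAbs (g : (ℤ × ℤ) → ℤ) : (ℤ × ℤ) → ℤ := fun A => |g A|

def IsQMove (S : Finset (ℤ × ℤ)) (c : Sym2 (ℤ × ℤ) → ℤ) : Prop :=
  (∃ A g, A ∈ S ∧ IsMove S g ∧ g A = 0 ∧ c = boxProd (fun B => 2 * chi A B) g) ∨
  (∃ g, IsMove S g ∧ c = boxProd (moveAbs g) g)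

def StepList (S : Finset (ℤ × ℤ)) :
    List (Finset (ℤ × ℤ)) → List ((ℤ × ℤ) → ℤ) → Prop
  | [_], [] => True
  | I :: I' :: Ps, g :: L => LegalMove S I g I' ∧ StepList S (I' :: Ps) L
  | _, _ => False

def pOfSeq (A : ℤ × ℤ) : List (Finset (ℤ × ℤ)) → List ((ℤ × ℤ) → ℤ) → ℕ
  | I :: Ps, g :: L => (if g A ≠ 0 then 1 else if A ∈ I then 1 else 0) + pOfSeq A Ps L
  | _, _ => 0

def bothCount (A A' : ℤ × ℤ) : List ((ℤ × ℤ) → ℤ) → ℕ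
  | [] => 0
  | g :: L => (if g A ≠ 0 ∧ g A' ≠ 0 then 1 else 0) + bothCount A A' L

noncomputable def pagoda (P : ℤ × ℤ) : ℝ := ((Real.sqrt 5 - 1) / 2) ^ (P.1.natAbs + P.2.natAbs)

/-!
A move and its reverse have sum `2 χ_Q` and difference `2 χ_P - 2 χ_R`, where `Q` is the middle
point and `P`, `R` are the extremities. Modulo the span of the moves, `2 χ` therefore vanishes at
middle points and is constant on classes of the equivalence relation generated by the neighbor
relation, so it vanishes at every point whose class contains a middle point.
-/

/-- The module `V(S, ℤ)` generated by the moves of the board `S`, inside the functions on all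
of `ℤ × ℤ`. -/
def moveSpan (S : Finset (ℤ × ℤ)) : Submodule ℤ (ℤ × ℤ → ℤ) :=
  Submodule.span ℤ {f | IsMove S f}

/-- The triples of points underlying the moves of `S`: the extremities are `P` and `R`, and the
middle point is `Q`. -/
def IsMoveTriple (S : Finset (ℤ × ℤ)) (P Q R : ℤ × ℤ) : Prop :=
  ∃ d ∈ dirs, P ∈ S ∧ Q ∈ S ∧ R ∈ S ∧ Q = P + d ∧ R = Q + d

/-- The isolated points of the board `S`: those whose equivalence class contains no middle point.
Membership in `S` is not part of the definition, so points off the board are isolated as well. -/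
def IsIsolated (S : Finset (ℤ × ℤ)) (P : ℤ × ℤ) : Prop :=
  ¬∃ Q, Relation.EqvGen (Neighbor S) P Q ∧ IsMiddle S Q

theorem neg_mem_dirs : ∀ d ∈ dirs, -d ∈ dirs := by decide

theorem eq_sum_smul_chi {S : Finset (ℤ × ℤ)} {g : ℤ × ℤ → ℤ} (hg : ∀ P, P ∉ S → g P = 0) :
    g = ∑ P ∈ S, g P • chi P := by
  funext X
  by_cases hX : X ∈ S
  · simp [chi, hX]
  · simp [chi, hX, hg X hX]

section

variable {S : Finset (ℤ × ℤ)} {P Q R : ℤ × ℤ}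

theorem IsMoveTriple.reverse (h : IsMoveTriple S P Q R) : IsMoveTriple S R Q P := by
  obtain ⟨d, hd, hP, hQ, hR, rfl, rfl⟩ := h
  exact ⟨-d, neg_mem_dirs d hd, hR, hQ, hP, by abel, by abel⟩

theorem IsMoveTriple.move_mem_moveSpan (h : IsMoveTriple S P Q R) :
    chi P + chi Q - chi R ∈ moveSpan S := by
  obtain ⟨d, hd, hP, hQ, hR, rfl, rfl⟩ := h
  exact Submodule.subset_span ⟨P, d, hd, hP, hQ, hR, rfl⟩

theorem IsMoveTriple.two_smul_chi_middle_mem_moveSpan (h : IsMoveTriple S P Q R) :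
    (2 : ℤ) • chi Q ∈ moveSpan S := by
  have hsum : (2 : ℤ) • chi Q = (chi P + chi Q - chi R) + (chi R + chi Q - chi P) := by module
  rw [hsum]
  exact add_mem h.move_mem_moveSpan h.reverse.move_mem_moveSpan

theorem IsMoveTriple.two_smul_chi_smodEq (h : IsMoveTriple S P Q R) :
    (2 : ℤ) • chi P ≡ (2 : ℤ) • chi R [SMOD moveSpan S] := by
  have hdiff : (2 : ℤ) • chi P - (2 : ℤ) • chi R =
      (chi P + chi Q - chi R) - (chi R + chi Q - chi P) := by module
  rw [SModEq.sub_mem, hdiff]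
  exact sub_mem h.move_mem_moveSpan h.reverse.move_mem_moveSpan

theorem IsMiddle.exists_isMoveTriple (h : IsMiddle S Q) : ∃ P R, IsMoveTriple S P Q R := by
  obtain ⟨P, d, hd, hP, hQ, hR, rfl⟩ := h
  exact ⟨P, P + d + d, d, hd, hP, hQ, hR, rfl, rfl⟩

theorem Neighbor.exists_isMoveTriple (h : Neighbor S P R) : ∃ Q, IsMoveTriple S P Q R := by
  obtain ⟨d, hd, hP, hQ, hR, rfl⟩ := h
  exact ⟨P + d, d, hd, hP, hQ, hR, rfl, rfl⟩

theorem two_smul_chi_smodEq_of_eqvGen (h : Relation.EqvGen (Neighbor S) P Q) :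
    (2 : ℤ) • chi P ≡ (2 : ℤ) • chi Q [SMOD moveSpan S] := by
  induction h with
  | rel _ _ hN =>
    obtain ⟨_, hT⟩ := hN.exists_isMoveTriple
    exact hT.two_smul_chi_smodEq
  | refl _ => exact SModEq.rfl
  | symm _ _ _ ih => exact ih.symm
  | trans _ _ _ _ _ ih₁ ih₂ => exact ih₁.trans ih₂

theorem two_smul_chi_mem_moveSpan_of_not_isIsolated (hP : ¬IsIsolated S P) :
    (2 : ℤ) • chi P ∈ moveSpan S := by
  obtain ⟨Q, hPQ, hQ⟩ := not_not.mp hP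
  obtain ⟨_, _, hT⟩ := hQ.exists_isMoveTriple
  have hQ_zero : (2 : ℤ) • chi Q ≡ 0 [SMOD moveSpan S] :=
    SModEq.zero.mpr hT.two_smul_chi_middle_mem_moveSpan
  exact SModEq.zero.mp ((two_smul_chi_smodEq_of_eqvGen hPQ).trans hQ_zero)

end

theorem even_functions_in_move_span_general (S : Finset (ℤ × ℤ)) (g : ℤ × ℤ → ℤ)
    (hsupp : ∀ P, P ∉ S → g P = 0) (hiso : ∀ P ∈ S, IsIsolated S P → g P = 0)
    (heven : ∀ P, 2 ∣ g P) : g ∈ moveSpan S := by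
  rw [eq_sum_smul_chi hsupp]
  refine sum_mem fun P hP => ?_
  by_cases hPiso : IsIsolated S P
  · simp only [hiso P hP hPiso, zero_smul, zero_mem]
  · obtain ⟨k, hk⟩ := heven P
    rw [hk, mul_comm, mul_smul]
    exact Submodule.smul_mem _ k (two_smul_chi_mem_moveSpan_of_not_isIsolated hPiso)

/-- If the board `S` has no isolated point, then `2·𝓕(S,ℤ) ⊆ V(S,ℤ)`: every
integer-valued function on the board all of whose values are even is a
`ℤ`-linear combination of moves. -/
theorem even_functions_in_move_span (S : Finset (ℤ × ℤ)) (hS : NoIsolatedPoint S)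
    (g : (ℤ × ℤ) → ℤ) (hsupp : ∀ P, P ∉ S → g P = 0) (heven : ∀ P, 2 ∣ g P) :
    g ∈ Submodule.span ℤ {f | IsMove S f} :=
  even_functions_in_move_span_general S g hsupp (fun P hP hPiso => absurd (hS P hP) hPiso) heven
end

section
/- Let π be a resource count on the board 𝔖. If one can go from the position I to the position J in legal moves, then ⟨π, χ_I⟩ ≥ ⟨π, χ_J⟩, i.e. Σ_{A∈I} π(A) ≥ Σ_{A∈J} π(A). -/
theorem ne_zero_of_mem_dirs {d : ℤ × ℤ} (hd : d ∈ dirs) : d ≠ 0 := by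
  rintro rfl
  exact absurd hd (by decide)

theorem sum_sdiff_pair_union_singleton_add {α M : Type*} [DecidableEq α] [AddCommMonoid M]
    {I : Finset α} {P Q R : α} (hPQ : P ≠ Q) (hP : P ∈ I) (hQ : Q ∈ I) (hR : R ∉ I) (f : α → M) :
    ∑ A ∈ (I \ {P, Q}) ∪ {R}, f A + (f P + f Q) = ∑ A ∈ I, f A + f R := by
  have hpair : {P, Q} ⊆ I := Finset.insert_subset hP (Finset.singleton_subset_iff.2 hQ)
  have hdisj : Disjoint (I \ {P, Q}) {R} :=
    Finset.disjoint_singleton_right.2 fun h => hR (Finset.mem_sdiff.1 h).1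
  rw [Finset.sum_union hdisj, Finset.sum_singleton, ← Finset.sum_pair hPQ, add_right_comm,
    Finset.sum_sdiff hpair]

theorem LegalMove.sum_le {S I I' : Finset (ℤ × ℤ)} {g : (ℤ × ℤ) → ℤ} {π : (ℤ × ℤ) → ℝ}
    (h : LegalMove S I g I') (hπ : IsResourceCount S π) :
    ∑ A ∈ I', π A ≤ ∑ A ∈ I, π A := by
  obtain ⟨P, d, hd, hP, hQ, hR, -, hPI, hQI, hRI, rfl⟩ := h
  have hPQ : P ≠ P + d := left_ne_add.2 (ne_zero_of_mem_dirs hd)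
  have hsum := sum_sdiff_pair_union_singleton_add hPQ hPI hQI hRI π
  have hcount : π (P + d + d) ≤ π P + π (P + d) := hπ P d hd hP hQ hR
  linarith

theorem Transforms.le_of_forall_legalMove {α : Type*} [Preorder α] {S : Finset (ℤ × ℤ)}
    {F : Finset (ℤ × ℤ) → α} (hF : ∀ ⦃I g I'⦄, LegalMove S I g I' → F I' ≤ F I)
    {L : List ((ℤ × ℤ) → ℤ)} {I J : Finset (ℤ × ℤ)} (h : Transforms S L I J) : F J ≤ F I := by
  induction L generalizing I with
  | nil => exact (congrArg F h).ge
  | cons g L ih =>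
    obtain ⟨I', hmove, hrest⟩ := h
    exact (ih hrest).trans (hF hmove)

/-- A resource count does not increase along legal moves:
if one can go from `I` to `J`, then `⟨π,χ_I⟩ ≥ ⟨π,χ_J⟩`. -/
theorem resource_count_monotone (S : Finset (ℤ × ℤ)) (π : (ℤ × ℤ) → ℝ)
    (hπ : IsResourceCount S π) (I J : Finset (ℤ × ℤ)) (hI : I ⊆ S)
    (L : List ((ℤ × ℤ) → ℤ)) (h : Transforms S L I J) :
    ∑ A ∈ J, π A ≤ ∑ A ∈ I, π A :=
  h.le_of_forall_legalMove (F := fun K => ∑ A ∈ K, π A) fun _ _ _ hmove => hmove.sum_le hπ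
end

section
/- Let ρ = (√5 − 1)/2 and define π : ℤ² → ℝ by π(a,b) = ρ^{|a|+|b|}. Then for every P ∈ ℤ² and every d ∈ {(1,0),(−1,0),(0,1),(0,−1)}, one has π(P) + π(P + d) ≥ π(P + 2d); that is, π restricts to a resource count on every board. -/
/-!
Since `1 ≤ ρ ^ 2 + ρ`, we have `ρ ^ k ≤ ρ ^ (k + 2) + ρ ^ (k + 1)`. A step in a direction of `dirs`
changes `|a| + |b|` by at most `1`, so if `k` is the exponent at `P + 2d`, then the exponents at `P`
and `P + d` are at most `k + 2` and `k + 1`, and powers of `ρ ≤ 1` decrease with the exponent.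
-/

section GoldenPowers

variable {R : Type*} [Semiring R] [PartialOrder R] [IsOrderedRing R] {ρ : R}

lemma pow_le_pow_add_pow_of_one_le_sq_add_self (h0 : 0 ≤ ρ) (h1 : ρ ≤ 1) (h : 1 ≤ ρ ^ 2 + ρ)
    {k m n : ℕ} (hm : m ≤ k + 2) (hn : n ≤ k + 1) : ρ ^ k ≤ ρ ^ m + ρ ^ n :=
  calc ρ ^ k ≤ ρ ^ k * (ρ ^ 2 + ρ) := le_mul_of_one_le_right (pow_nonneg h0 k) h
    _ = ρ ^ (k + 2) + ρ ^ (k + 1) := by rw [mul_add, ← pow_add, ← pow_succ]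
    _ ≤ ρ ^ m + ρ ^ n :=
      add_le_add (pow_le_pow_of_le_one h0 h1 hm) (pow_le_pow_of_le_one h0 h1 hn)

lemma pow_add_add_le_pow_add_pow_add {M : Type*} [Add M] {ℓ : M → ℕ} {d : M}
    (h0 : 0 ≤ ρ) (h1 : ρ ≤ 1) (h : 1 ≤ ρ ^ 2 + ρ) (hℓ : ∀ x, ℓ x ≤ ℓ (x + d) + 1) (x : M) :
    ρ ^ ℓ (x + d + d) ≤ ρ ^ ℓ x + ρ ^ ℓ (x + d) :=
  have hx : ℓ (x + d) ≤ ℓ (x + d + d) + 1 := hℓ (x + d)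
  pow_le_pow_add_pow_of_one_le_sq_add_self h0 h1 h
    ((hℓ x).trans (Nat.add_le_add_right hx 1)) hx

end GoldenPowers

lemma natAbs_add_natAbs_le_of_mem_dirs {d : ℤ × ℤ} (hd : d ∈ dirs) (P : ℤ × ℤ) :
    P.1.natAbs + P.2.natAbs ≤ (P + d).1.natAbs + (P + d).2.natAbs + 1 := by
  simp only [dirs, Finset.mem_insert, Finset.mem_singleton] at hd
  rcases hd with rfl | rfl | rfl | rfl <;> simp only [Prod.fst_add, Prod.snd_add] <;> omega

lemma pagoda_eq_neg_goldenConj_pow (P : ℤ × ℤ) :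
    pagoda P = (-Real.goldenConj) ^ (P.1.natAbs + P.2.natAbs) := by
  rw [pagoda, Real.goldenConj, ← neg_div, neg_sub]

lemma pagoda_add_add_le {d : ℤ × ℤ} (hd : d ∈ dirs) (P : ℤ × ℤ) :
    pagoda (P + d + d) ≤ pagoda P + pagoda (P + d) := by
  have h0 : 0 ≤ -Real.goldenConj := neg_nonneg.mpr Real.goldenConj_neg.le
  have h1 : -Real.goldenConj ≤ 1 := neg_le.mp Real.neg_one_lt_goldenConj.le
  have h : (-Real.goldenConj) ^ 2 + -Real.goldenConj = 1 := by
    linear_combination Real.goldenConj_sq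
  simp only [pagoda_eq_neg_goldenConj_pow]
  exact pow_add_add_le_pow_add_pow_add (ℓ := fun Q : ℤ × ℤ ↦ Q.1.natAbs + Q.2.natAbs)
    h0 h1 h.ge (natAbs_add_natAbs_le_of_mem_dirs hd) P

/-- With `ρ = (√5 − 1)/2`, the function `π(a,b) = ρ^{|a|+|b|}` satisfies
`π(P) + π(P+d) ≥ π(P+2d)` for every `P` and direction `d`; in particular it
restricts to a resource count on every board. -/
theorem pagoda_is_resource_count :
    (∀ P d : ℤ × ℤ, d ∈ dirs → pagoda (P + d + d) ≤ pagoda P + pagoda (P + d)) ∧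
      ∀ S : Finset (ℤ × ℤ), IsResourceCount S pagoda := by
  exact ⟨fun P _ hd ↦ pagoda_add_add_le hd P, fun _ P _ hd _ _ _ ↦ pagoda_add_add_le hd P⟩
end

section
/- If the position J is obtained from the position I by a single legal move g, then χ_I⊠χ_I = χ_J⊠χ_J + |g|⊠g + Σ_{A∈J, g(A)=0} 2χ_A⊠g. -/
/-!
Put `g = χ_I - χ_J`. Since `⊠` is symmetric and bilinear, a difference of squares factors:
`χ_I ⊠ χ_I - χ_J ⊠ χ_J = (χ_I + χ_J) ⊠ g`. Pointwise, `a + b = |a - b| + 2 min a b` turns the first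
factor into `|g| + 2 χ_{I ∩ J}`, and `I ∩ J` is exactly the set of points of `J` at which `g`
vanishes. The geometry of the move enters only through `χ_J = χ_I - g`.
-/

theorem boxProd_mk (f g : ℤ × ℤ → ℤ) (A B : ℤ × ℤ) :
    boxProd f g s(A, B) = if A = B then f A * g A else f A * g B + f B * g A :=
  rfl

theorem boxProd_add_left (f₁ f₂ g : ℤ × ℤ → ℤ) :
    boxProd (f₁ + f₂) g = boxProd f₁ g + boxProd f₂ g := by
  ext ⟨A, B⟩
  simp only [boxProd_mk, Pi.add_apply]
  split_ifs <;> ring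

theorem boxProd_sum_left {ι : Type*} (s : Finset ι) (f : ι → ℤ × ℤ → ℤ) (g : ℤ × ℤ → ℤ) :
    boxProd (∑ i ∈ s, f i) g = ∑ i ∈ s, boxProd (f i) g :=
  map_sum (AddMonoidHom.mk' (boxProd · g) (boxProd_add_left · · g)) f s

theorem boxProd_self_sub_boxProd_self (f g : ℤ × ℤ → ℤ) :
    boxProd f f - boxProd g g = boxProd (f + g) (f - g) := by
  ext ⟨A, B⟩
  simp only [boxProd_mk, Pi.add_apply, Pi.sub_apply]
  split_ifs <;> ring

theorem sum_chi (T : Finset (ℤ × ℤ)) : ∑ A ∈ T, chi A = chiSet T := by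
  ext B
  simp [chi, chiSet]

theorem sum_boxProd_two_mul_chi (T : Finset (ℤ × ℤ)) (g : ℤ × ℤ → ℤ) :
    ∑ A ∈ T, boxProd (fun B => 2 * chi A B) g = boxProd (2 * chiSet T) g := by
  rw [← sum_chi, Finset.mul_sum, boxProd_sum_left]
  rfl

theorem chiSet_add_chiSet (I J : Finset (ℤ × ℤ)) :
    chiSet I + chiSet J = moveAbs (chiSet I - chiSet J) + 2 * chiSet (I ∩ J) := by
  ext A
  by_cases hI : A ∈ I <;> by_cases hJ : A ∈ J <;> simp [chiSet, moveAbs, hI, hJ]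

theorem filter_chiSet_sub_chiSet_eq_zero (I J : Finset (ℤ × ℤ)) :
    J.filter (fun A => (chiSet I - chiSet J) A = 0) = I ∩ J := by
  ext A
  rw [Finset.mem_filter, Finset.mem_inter]
  by_cases hI : A ∈ I <;> by_cases hJ : A ∈ J <;> simp [chiSet, hI, hJ]

theorem zero_notMem_dirs : (0 : ℤ × ℤ) ∉ dirs := by
  decide

theorem LegalMove.chiSet_sub_chiSet {S I J : Finset (ℤ × ℤ)} {g : ℤ × ℤ → ℤ}
    (h : LegalMove S I g J) : chiSet I - chiSet J = g := by
  obtain ⟨P, d, hd, -, -, -, rfl, hP, hQ, hR, rfl⟩ := h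
  have hPQ : P ≠ P + d := by
    simpa using ne_of_mem_of_not_mem hd zero_notMem_dirs
  have hsub : {P, P + d} ⊆ I := by
    simp [Finset.insert_subset_iff, hP, hQ]
  have hdisj : Disjoint (I \ {P, P + d}) {P + d + d} := by
    simp [hR]
  have hI : chiSet I = chiSet (I \ {P, P + d}) + (chi P + chi (P + d)) := by
    rw [← sum_chi, ← sum_chi, ← Finset.sum_pair hPQ, Finset.sum_sdiff hsub]
  have hJ : chiSet (I \ {P, P + d} ∪ {P + d + d}) =
      chiSet (I \ {P, P + d}) + chi (P + d + d) := by
    rw [← sum_chi, ← sum_chi, Finset.sum_union hdisj, Finset.sum_singleton]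
  rw [hI, hJ, add_sub_add_left_eq_sub]

theorem quadratic_move_identity_general (I J : Finset (ℤ × ℤ)) (g : ℤ × ℤ → ℤ)
    (hg : chiSet I - chiSet J = g) :
    boxProd (chiSet I) (chiSet I) =
      boxProd (chiSet J) (chiSet J) + boxProd (moveAbs g) g +
        ∑ A ∈ J.filter (fun A => g A = 0), boxProd (fun B => 2 * chi A B) g := by
  subst hg
  rw [sum_boxProd_two_mul_chi, filter_chiSet_sub_chiSet_eq_zero, add_assoc, ← boxProd_add_left,
    ← chiSet_add_chiSet, ← boxProd_self_sub_boxProd_self, add_sub_cancel]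

/-- If `J` is obtained from `I` by the single legal move `g`, then
`χ_I⊠χ_I = χ_J⊠χ_J + |g|⊠g + Σ_{A ∈ J, g(A)=0} 2χ_A⊠g`. -/
theorem quadratic_move_identity (S I J : Finset (ℤ × ℤ)) (g : (ℤ × ℤ) → ℤ)
    (h : LegalMove S I g J) :
    boxProd (chiSet I) (chiSet I) =
      boxProd (chiSet J) (chiSet J) + boxProd (moveAbs g) g +
        ∑ A ∈ J.filter (fun A => g A = 0), boxProd (fun B => 2 * chi A B) g :=
  quadratic_move_identity_general I J g h.chiSet_sub_chiSet
end

section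
/- Let 𝔖 be a board and I, J be positions on 𝔖. If χ_I⊠χ_I − χ_J⊠χ_J belongs to V⁺(𝔖⊠𝔖,ℤ), then χ_I − χ_J belongs to V⁺(𝔖,ℤ), the set of linear combinations of moves of 𝔖 with nonnegative integer coefficients. (The simple quadratic test implies the nonnegative integer linear test.) -/
/-!
Restrict to the diagonal of `𝔖 ⊠ 𝔖`, where `g₁ ⊠ g₂` becomes the pointwise product `g₁ * g₂`. The
generator `2χ_A ⊠ g` vanishes there because `g A = 0`, while `|g| ⊠ g` restricts to `g` because `g`
takes values in `{-1, 0, 1}`; hence `V⁺(𝔖 ⊠ 𝔖, ℤ)` is carried into `V⁺(𝔖, ℤ)`. Since `χ_I` and `χ_J`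
are idempotent, `χ_I ⊠ χ_I - χ_J ⊠ χ_J` restricts to `χ_I - χ_J`.
-/

/-- Restriction of functions on unordered pairs to the diagonal pairs `s(A, A)`, as an additive
homomorphism, so that it can be applied generator by generator to `V⁺(𝔖 ⊠ 𝔖, ℤ)`. -/
def diagRestriction {α M : Type*} [AddCommMonoid M] : (Sym2 α → M) →+ (α → M) :=
  (LinearMap.funLeft ℕ M Sym2.diag).toAddMonoidHom

theorem diagRestriction_boxProd (g₁ g₂ : ℤ × ℤ → ℤ) :
    diagRestriction (boxProd g₁ g₂) = g₁ * g₂ :=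
  funext fun _ => if_pos rfl

theorem chi_mul (A : ℤ × ℤ) (g : ℤ × ℤ → ℤ) : chi A * g = g A • chi A := by
  funext B
  by_cases hBA : B = A <;> simp [chi, hBA]

theorem isIdempotentElem_chiSet (I : Finset (ℤ × ℤ)) : IsIdempotentElem (chiSet I) := by
  funext A
  simp [chiSet]

namespace IsMove

variable {S : Finset (ℤ × ℤ)} {g : ℤ × ℤ → ℤ}

theorem abs_apply_le_one (hg : IsMove S g) (A : ℤ × ℤ) : |g A| ≤ 1 := by
  obtain ⟨P, d, hd, -, -, -, rfl⟩ := hg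
  have hP : P ≠ P + d := by simpa using ne_zero_of_mem_dirs hd
  simp only [Pi.add_apply, Pi.sub_apply, chi]
  split_ifs <;> simp_all

theorem moveAbs_mul_self (hg : IsMove S g) : moveAbs g * g = g := by
  funext A
  change |g A| * g A = g A
  rcases Int.abs_le_one_iff.1 (hg.abs_apply_le_one A) with h | h | h <;> simp [h]

end IsMove

theorem diagRestriction_boxProd_two_mul_chi {A : ℤ × ℤ} {g : ℤ × ℤ → ℤ} (hgA : g A = 0) :
    diagRestriction (boxProd (fun B => 2 * chi A B) g) = 0 :=
  calc diagRestriction (boxProd (fun B => 2 * chi A B) g)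
    _ = 2 * chi A * g := diagRestriction_boxProd _ g
    _ = 2 * (g A • chi A) := by rw [mul_assoc, chi_mul]
    _ = 0 := by rw [hgA, zero_smul, mul_zero]

theorem IsQMove.diagRestriction_mem_closure {S : Finset (ℤ × ℤ)} {c : Sym2 (ℤ × ℤ) → ℤ}
    (hc : IsQMove S c) : diagRestriction c ∈ AddSubmonoid.closure {g | IsMove S g} := by
  rcases hc with ⟨A, g, -, -, hgA, rfl⟩ | ⟨g, hg, rfl⟩
  · rw [diagRestriction_boxProd_two_mul_chi hgA]
    exact zero_mem _
  · rw [diagRestriction_boxProd, hg.moveAbs_mul_self]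
    exact AddSubmonoid.subset_closure hg

theorem closure_isQMove_le_comap_diagRestriction (S : Finset (ℤ × ℤ)) :
    AddSubmonoid.closure {c | IsQMove S c} ≤
      (AddSubmonoid.closure {g | IsMove S g}).comap diagRestriction :=
  AddSubmonoid.closure_le.2 fun _ hc => hc.diagRestriction_mem_closure

/-- The simple quadratic test implies the nonnegative-integer linear test:
if `χ_I⊠χ_I − χ_J⊠χ_J ∈ V⁺(S⊠S,ℤ)` then `χ_I − χ_J ∈ V⁺(S,ℤ)`. -/
theorem quadratic_test_implies_linear_test (S I J : Finset (ℤ × ℤ)) (hI : I ⊆ S) (hJ : J ⊆ S)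
    (h : boxProd (chiSet I) (chiSet I) - boxProd (chiSet J) (chiSet J) ∈
      AddSubmonoid.closure {c | IsQMove S c}) :
    chiSet I - chiSet J ∈ AddSubmonoid.closure {g | IsMove S g} := by
  have restriction_eq : diagRestriction (boxProd (chiSet I) (chiSet I) -
      boxProd (chiSet J) (chiSet J)) = chiSet I - chiSet J := by
    rw [map_sub, diagRestriction_boxProd, diagRestriction_boxProd,
      (isIdempotentElem_chiSet I).eq, (isIdempotentElem_chiSet J).eq]
  rw [← restriction_eq]
  exact closure_isQMove_le_comap_diagRestriction S h
end

section
/- Let 𝓕 = (g₁,…,g_k) be a sequence of legal moves transforming the position I into the position J. Then Σ_{A∈𝔖} 𝔭(A,𝓕) = (|I| − |J|)·(|I| + |J| + 3)/2. -/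
/-!
A legal move `P, Q ↦ R` adds `1` to `𝔭(A, 𝓕)` exactly for the points `A` of the current position
and for `R`: the points `P` and `Q`, where the move is nonzero, are occupied before it. A move from
a position of size `n` thus adds `n + 1` to `Σ_A 𝔭(A, 𝓕)` and leads to a position of size `n - 1`,
so the total is the sum of `n + 1` over `|J| < n ≤ |I|`.
-/

theorem chi_add_chi_sub_chi_ne_zero_iff {P Q R : ℤ × ℤ} (hPR : P ≠ R) (hQR : Q ≠ R) (A : ℤ × ℤ) :
    (chi P + chi Q - chi R) A ≠ 0 ↔ A = P ∨ A = Q ∨ A = R := by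
  simp only [Pi.sub_apply, Pi.add_apply, chi]
  grind

namespace LegalMove

variable {S I I' : Finset (ℤ × ℤ)} {g : (ℤ × ℤ) → ℤ}

theorem subset (h : LegalMove S I g I') (hI : I ⊆ S) : I' ⊆ S := by
  obtain ⟨P, d, -, -, -, hR, -, -, -, -, rfl⟩ := h
  exact Finset.union_subset (Finset.sdiff_subset.trans hI) (Finset.singleton_subset_iff.2 hR)

theorem card_add_one (h : LegalMove S I g I') : I'.card + 1 = I.card := by
  obtain ⟨P, d, -, -, -, -, -, hP, hQ, hR, rfl⟩ := h
  have hPQ : P ≠ P + d := fun hPQ => hR (hPQ ▸ hQ)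
  have hsub : {P, P + d} ⊆ I := Finset.insert_subset hP (Finset.singleton_subset_iff.2 hQ)
  have hdisj : Disjoint (I \ {P, P + d}) {P + d + d} :=
    Finset.disjoint_singleton_right.2 fun hRI => hR (Finset.mem_sdiff.1 hRI).1
  calc ((I \ {P, P + d}) ∪ {P + d + d}).card + 1
      = (I \ {P, P + d}).card + ({P, P + d} : Finset (ℤ × ℤ)).card := by
        rw [Finset.card_union_of_disjoint hdisj, Finset.card_singleton, Finset.card_pair hPQ]
    _ = I.card := Finset.card_sdiff_add_card_eq_card hsub

theorem exists_ne_zero_or_mem_iff (h : LegalMove S I g I') :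
    ∃ R ∈ S, R ∉ I ∧ ∀ A, g A ≠ 0 ∨ A ∈ I ↔ A ∈ insert R I := by
  obtain ⟨P, d, -, -, -, hRS, rfl, hP, hQ, hR, -⟩ := h
  refine ⟨P + d + d, hRS, hR, fun A => ?_⟩
  rw [chi_add_chi_sub_chi_ne_zero_iff (ne_of_mem_of_not_mem hP hR) (ne_of_mem_of_not_mem hQ hR),
    Finset.mem_insert]
  grind

theorem card_filter_ne_zero_or_mem (h : LegalMove S I g I') (hI : I ⊆ S) :
    (S.filter fun A => g A ≠ 0 ∨ A ∈ I).card = I.card + 1 := by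
  obtain ⟨R, hRS, hR, hiff⟩ := h.exists_ne_zero_or_mem_iff
  simp only [hiff]
  rw [Finset.filter_mem_eq_inter, Finset.inter_eq_right.2 (Finset.insert_subset hRS hI),
    Finset.card_insert_of_notMem hR]

end LegalMove

theorem sum_pOfSeq_cons (S I : Finset (ℤ × ℤ)) (Ls : List (Finset (ℤ × ℤ)))
    (g : (ℤ × ℤ) → ℤ) (L : List ((ℤ × ℤ) → ℤ)) :
    ∑ A ∈ S, pOfSeq A (I :: Ls) (g :: L) =
      (S.filter fun A => g A ≠ 0 ∨ A ∈ I).card + ∑ A ∈ S, pOfSeq A Ls L := by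
  simp only [pOfSeq, Finset.sum_add_distrib, Finset.card_filter, ite_or]

/-- For a sequence `𝓕` of legal moves going from `I` to `J`,
`Σ_{A ∈ S} 𝔭(A,𝓕) = (|I| − |J|)(|I| + |J| + 3)/2`. -/
theorem sum_p_eq (S I J : Finset (ℤ × ℤ)) (hI : I ⊆ S)
    (Ls : List (Finset (ℤ × ℤ))) (L : List ((ℤ × ℤ) → ℤ))
    (hstep : StepList S Ls L) (hhead : Ls.head? = some I) (hlast : Ls.getLast? = some J) :
    (2 : ℤ) * ∑ A ∈ S, (pOfSeq A Ls L : ℤ) =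
      ((I.card : ℤ) - (J.card : ℤ)) * ((I.card : ℤ) + (J.card : ℤ) + 3) := by
  rw [← Nat.cast_sum]
  fun_induction StepList S Ls L generalizing I with
  | case1 K =>
    obtain rfl : K = I := by simpa using hhead
    obtain rfl : K = J := by simpa using hlast
    simp [pOfSeq]
  | case2 K I' Ps g L ih =>
    obtain ⟨hmove, hrest⟩ := hstep
    obtain rfl : K = I := by simpa using hhead
    have hsum := ih I' (hmove.subset hI) hrest rfl (by simpa using hlast)
    have hcard : (I'.card : ℤ) + 1 = K.card := mod_cast hmove.card_add_one
    calc (2 : ℤ) * (∑ A ∈ S, pOfSeq A (K :: I' :: Ps) (g :: L) : ℕ)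
        = 2 * (K.card + 1) + 2 * (∑ A ∈ S, pOfSeq A (I' :: Ps) L : ℕ) := by
          rw [sum_pOfSeq_cons, hmove.card_filter_ne_zero_or_mem hI]
          push_cast
          ring
      _ = 2 * (K.card + 1) + (I'.card - J.card) * (I'.card + J.card + 3) := by rw [hsum]
      _ = (K.card - J.card) * (K.card + J.card + 3) := by rw [← hcard]; ring
  | case3 => exact hstep.elim
end

section
/- (Leibniz) If the sequence of legal moves g₁, g₂, …, g_k transforms the position I into the position J, then the reversed sequence g_k, …, g₂, g₁ is a sequence of legal moves transforming the complementary position 𝔖 \ J into 𝔖 \ I. -/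
/- Complementation swaps pegs and holes. A move empties `P` and `Q` and fills `R`, so in the
complement of its result `P` and `Q` are occupied and `R` is free: the same move is legal there,
and it restores the complement of the position it started from. -/

theorem sdiff_sdiff_sup_sdiff_sup_cancel {α : Type*} [GeneralizedBooleanAlgebra α] {s i a b : α}
    (ha : a ≤ i) (hb : b ≤ s) (hib : Disjoint i b) : (s \ (i \ a ⊔ b)) \ a ⊔ b = s \ i := by
  have hbi : b ≤ s \ i := le_sdiff.2 ⟨hb, hib.symm⟩
  calc (s \ (i \ a ⊔ b)) \ a ⊔ b
    _ = s \ (i \ a ⊔ a ⊔ b) ⊔ b := by rw [sdiff_sdiff_left, sup_right_comm]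
    _ = (s \ i) \ b ⊔ b := by rw [sdiff_sup_cancel ha, sdiff_sdiff_left]
    _ = s \ i := sdiff_sup_cancel hbi

theorem LegalMove.sdiff {S I I' : Finset (ℤ × ℤ)} {g : (ℤ × ℤ) → ℤ}
    (h : LegalMove S I g I') : LegalMove S (S \ I') g (S \ I) := by
  obtain ⟨P, d, hd, hP, hQ, hR, hg, hPI, hQI, hRI, rfl⟩ := h
  have hPR : P ≠ P + d + d := ne_of_mem_of_not_mem hPI hRI
  have hQR : P + d ≠ P + d + d := ne_of_mem_of_not_mem hQI hRI
  have hpair : {P, P + d} ⊆ I := Finset.insert_subset hPI (Finset.singleton_subset_iff.2 hQI)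
  have hrestore : S \ I = (S \ (I \ {P, P + d} ∪ {P + d + d})) \ {P, P + d} ∪ {P + d + d} :=
    (sdiff_sdiff_sup_sdiff_sup_cancel hpair (Finset.singleton_subset_iff.2 hR)
      (Finset.disjoint_singleton_right.2 hRI)).symm
  refine ⟨P, d, hd, hP, hQ, hR, hg, ?_, ?_, ?_, hrestore⟩
  · simp [hP, hPR]
  · simp [hQ, hQR]
  · simp

theorem transforms_append {S I K : Finset (ℤ × ℤ)} {L₁ L₂ : List ((ℤ × ℤ) → ℤ)} :
    Transforms S (L₁ ++ L₂) I K ↔ ∃ J, Transforms S L₁ I J ∧ Transforms S L₂ J K := by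
  induction L₁ generalizing I with
  | nil => simp [Transforms]
  | cons g L₁ ih =>
    simp only [List.cons_append, Transforms, ih]
    tauto

theorem transforms_singleton {S I J : Finset (ℤ × ℤ)} {g : (ℤ × ℤ) → ℤ} :
    Transforms S [g] I J ↔ LegalMove S I g J := by
  simp [Transforms]

/-- Leibniz: if the sequence of legal moves `L` transforms `I` into `J`, then the
reversed sequence transforms `S \\ J` into `S \\ I`. -/
theorem leibniz_reversal (S I J : Finset (ℤ × ℤ)) (hI : I ⊆ S)
    (L : List ((ℤ × ℤ) → ℤ)) (h : Transforms S L I J) :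
    Transforms S L.reverse (S \ J) (S \ I) := by
  induction L using List.reverseRecOn generalizing J with
  | nil =>
    obtain rfl : I = J := h
    rfl
  | append_singleton L g ih =>
    obtain ⟨J', hL, hg⟩ := transforms_append.1 h
    rw [List.reverse_concat]
    exact ⟨S \ J', (transforms_singleton.1 hg).sdiff, ih J' hL⟩
end

section
/- Let 𝓕 = (g₁,…,g_k) be a sequence of legal moves transforming the position I into the position J, and let A, A′ be two points of 𝔖 such that no position reachable from I by legal moves contains both A and A′ (i.e. Height(A, A′, I) = ∞). Then 𝔭(A,𝓕) + 𝔭(A′,𝓕) − Σ_{g : g(A)≠0 and g(A′)≠0} x(g) ≤ |I| − |J|. -/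
/-! Every move removes exactly one peg, so `|I| - |J|` is the number of moves. It remains to see
that a single move `g` contributes at most `1 + [g(A) ≠ 0 ∧ g(A') ≠ 0]` to `𝔭(A) + 𝔭(A')`. Only the
case where both points contribute and one of them, say `A`, has `g(A) = 0` needs an argument: then
`A` is occupied both before and after `g`, while `A'` is occupied before or after `g`, so one of
these two positions contains both points. -/

theorem ne_add_of_mem_dirs {d : ℤ × ℤ} (hd : d ∈ dirs) (P : ℤ × ℤ) : P ≠ P + d := by
  have hzero : (0 : ℤ × ℤ) ∉ dirs := by decide
  simpa using ne_of_mem_of_not_mem hd hzero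

namespace LegalMove

variable {S I I' : Finset (ℤ × ℤ)} {g : ℤ × ℤ → ℤ} {A A' : ℤ × ℤ}

theorem card_eq (h : LegalMove S I g I') : I.card = I'.card + 1 := by
  obtain ⟨P, d, hd, -, -, -, -, hP, hQ, hR, rfl⟩ := h
  have hPQ := ne_add_of_mem_dirs hd P
  have hsub : {P, P + d} ⊆ I := Finset.insert_subset hP (Finset.singleton_subset_iff.2 hQ)
  have hcard := Finset.card_sdiff_add_card_eq_card hsub
  rw [Finset.card_pair hPQ] at hcard
  rw [Finset.card_union_of_disjoint (by simp [hR]), Finset.card_singleton]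
  omega

theorem chiSet_eq_sub (h : LegalMove S I g I') : chiSet I' = chiSet I - g := by
  obtain ⟨P, d, hd, -, -, -, rfl, hP, hQ, hR, rfl⟩ := h
  have hPQ := ne_add_of_mem_dirs hd P
  ext X
  simp only [chiSet, chi, Pi.add_apply, Pi.sub_apply]
  grind

theorem mem_iff_of_apply_eq_zero (h : LegalMove S I g I') (hA : g A = 0) :
    A ∈ I' ↔ A ∈ I := by
  have hchi : chiSet I' A = chiSet I A := by simp [h.chiSet_eq_sub, hA]
  grind [chiSet]

theorem mem_or_mem_of_apply_ne_zero (h : LegalMove S I g I') (hA : g A ≠ 0) :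
    A ∈ I ∨ A ∈ I' := by
  have hchi : chiSet I' A = chiSet I A - g A := congrFun h.chiSet_eq_sub A
  grind [chiSet]

theorem both_mem_or_both_mem (h : LegalMove S I g I') (hA : g A = 0) (hAI : A ∈ I)
    (hA' : g A' ≠ 0 ∨ A' ∈ I) : A ∈ I ∧ A' ∈ I ∨ A ∈ I' ∧ A' ∈ I' := by
  have hAI' : A ∈ I' := (h.mem_iff_of_apply_eq_zero hA).2 hAI
  have hor : A' ∈ I ∨ A' ∈ I' := hA'.elim h.mem_or_mem_of_apply_ne_zero .inl
  exact hor.imp (⟨hAI, ·⟩) (⟨hAI', ·⟩)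

-- `pOfSeq` never reads the final position, so `pOfSeq A [I] [g]` is the contribution of one move.
theorem pOfSeq_add_pOfSeq_le (h : LegalMove S I g I')
    (hI : ¬(A ∈ I ∧ A' ∈ I)) (hI' : ¬(A ∈ I' ∧ A' ∈ I')) :
    pOfSeq A [I] [g] + pOfSeq A' [I] [g] ≤ 1 + bothCount A A' [g] := by
  have hA := h.both_mem_or_both_mem (A := A) (A' := A')
  have hA' := h.both_mem_or_both_mem (A := A') (A' := A)
  simp only [pOfSeq, bothCount]
  grind

end LegalMove

namespace StepList

variable {S I J K : Finset (ℤ × ℤ)} {Ls : List (Finset (ℤ × ℤ))} {L : List (ℤ × ℤ → ℤ)}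
  {A A' : ℤ × ℤ}

theorem card_head_eq_length_add (h : StepList S Ls L) (hhead : Ls.head? = some I)
    (hlast : Ls.getLast? = some J) : I.card = L.length + J.card := by
  fun_induction StepList S Ls L generalizing I with
  | case1 => simp_all
  | case2 I₀ I' Ps g L ih =>
    obtain rfl : I₀ = I := by simpa using hhead
    have hcard := h.1.card_eq
    have hrest := ih h.2 rfl (by simpa using hlast)
    simp only [List.length_cons]
    omega
  | case3 => exact h.elim

theorem exists_transforms_of_mem (h : StepList S Ls L) (hhead : Ls.head? = some I)
    (hK : K ∈ Ls) : ∃ L', Transforms S L' I K := by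
  fun_induction StepList S Ls L generalizing I with
  | case1 => exact ⟨[], by simp_all [Transforms]⟩
  | case2 I₀ I' Ps g L ih =>
    obtain rfl : I₀ = I := by simpa using hhead
    obtain rfl | hK := List.mem_cons.1 hK
    · exact ⟨[], rfl⟩
    · obtain ⟨L', hL'⟩ := ih h.2 rfl hK
      exact ⟨g :: L', I', h.1, hL'⟩
  | case3 => exact h.elim

theorem pOfSeq_add_pOfSeq_le (h : StepList S Ls L) (hexcl : ∀ K ∈ Ls, ¬(A ∈ K ∧ A' ∈ K)) :
    pOfSeq A Ls L + pOfSeq A' Ls L ≤ L.length + bothCount A A' L := by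
  fun_induction StepList S Ls L with
  | case1 => simp [pOfSeq]
  | case2 I I' Ps g L ih =>
    have hmove := h.1.pOfSeq_add_pOfSeq_le (hexcl I (by simp)) (hexcl I' (by simp))
    have hrest := ih h.2 fun K hK => hexcl K (List.mem_cons_of_mem I hK)
    simp only [pOfSeq, bothCount, List.length_cons] at hmove hrest ⊢
    omega
  | case3 => exact h.elim

end StepList

theorem pair_constraint_general {S I J : Finset (ℤ × ℤ)} {Ls : List (Finset (ℤ × ℤ))}
    {L : List (ℤ × ℤ → ℤ)} {A A' : ℤ × ℤ} (hstep : StepList S Ls L)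
    (hhead : Ls.head? = some I) (hlast : Ls.getLast? = some J)
    (hexcl : ∀ K ∈ Ls, ¬(A ∈ K ∧ A' ∈ K)) :
    (pOfSeq A Ls L : ℤ) + (pOfSeq A' Ls L : ℤ) - (bothCount A A' L : ℤ)
      ≤ (I.card : ℤ) - (J.card : ℤ) := by
  have hcard := hstep.card_head_eq_length_add hhead hlast
  have hcount := hstep.pOfSeq_add_pOfSeq_le hexcl
  omega

/-- If no position reachable from `I` contains both `A` and `A'`, then for any
sequence `𝓕` of legal moves from `I` to `J`,
`𝔭(A,𝓕) + 𝔭(A',𝓕) − Σ_{g(A)≠0 ∧ g(A')≠0} x(g) ≤ |I| − |J|`. -/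
theorem pair_constraint (S I J : Finset (ℤ × ℤ)) (hI : I ⊆ S)
    (Ls : List (Finset (ℤ × ℤ))) (L : List ((ℤ × ℤ) → ℤ))
    (hstep : StepList S Ls L) (hhead : Ls.head? = some I) (hlast : Ls.getLast? = some J)
    (A A' : ℤ × ℤ) (hA : A ∈ S) (hA' : A' ∈ S)
    (hinf : ∀ (L' : List ((ℤ × ℤ) → ℤ)) (K : Finset (ℤ × ℤ)),
      Transforms S L' I K → ¬(A ∈ K ∧ A' ∈ K)) :
    (pOfSeq A Ls L : ℤ) + (pOfSeq A' Ls L : ℤ) - (bothCount A A' L : ℤ)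
      ≤ (I.card : ℤ) - (J.card : ℤ) :=
  pair_constraint_general hstep hhead hlast fun K hK =>
    (hstep.exists_transforms_of_mem hhead hK).elim (hinf · K)
end
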